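/- Suppose α has an adjusted nearest integer expansion and let d_i^+ be the quantity associated to γ_*. If ε_{i+1} = −1 and a_{i+1} ≥ 3, then (1 − α_i + |d_i^+|)/(1 − ᾱ_i α_i) ≥ (√10 + 2)/(√10 + 2 + 2(1 − ᾱ_i)). -/

import Mathlib

open Filter Finset

attribute [local instance] Classical.propDecidable

/-- Distance from `x` to the nearest integer, `‖x‖`. -/
noncomputable def nint (x : ℝ) : ℝ := |x - round x|

/-- The two-sided inhomogeneous approximation constant
`M(α,γ) = liminf_{|n|→∞} |n|·‖nα-γ‖`. -/
noncomputable def Mval (α γ : ℝ) : ℝ :=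
  Filter.liminf (fun n : ℤ => (|n| : ℝ) * nint (n * α - γ)) Filter.cofinite

/-- Denominators `q_i` of a semi-regular continued fraction with partial quotients `a`
and signs `e`: `q_0 = 1`, `q_1 = a_1`, `q_i = a_i q_{i-1} + ε_i q_{i-2}`. -/
noncomputable def qs (a e : ℕ → ℤ) : ℕ → ℤ
  | 0 => 1
  | 1 => a 1
  | i + 2 => a (i + 2) * qs a e (i + 1) + e (i + 2) * qs a e i

/-- Reversed tails `ᾱ_i = q_{i-1}/q_i` (with `ᾱ_0 = 0`). -/
noncomputable def ab (a e : ℕ → ℤ) (i : ℕ) : ℝ :=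
  if i = 0 then 0 else (qs a e (i - 1) : ℝ) / (qs a e i : ℝ)

/-- An adjusted nearest integer expansion of `α`: a semi-regular continued fraction
`α = 1/(a_1 + ε_2/(a_2 + ε_3/(a_3 + ⋯)))` with tails `t i = α_i`, satisfying the
conditions (i)-(iv) of an adjusted expansion. -/
structure ANIE (α : ℝ) where
  /-- partial quotients `a_i` (for `i ≥ 1`) -/
  a : ℕ → ℤ
  /-- signs `ε_i` -/
  e : ℕ → ℤ
  /-- tails: `t i = α_i`, `t 0 = α` -/
  t : ℕ → ℝ
  ha : ∀ i, 1 ≤ i → 2 ≤ a i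
  he : ∀ i, e i = 1 ∨ e i = -1
  he1 : e 1 = 1
  ht0 : t 0 = α
  htpos : ∀ i, 0 < t i
  htlt1 : ∀ i, t i < 1
  hrec : ∀ i, t i = 1 / ((a (i + 1) : ℝ) + (e (i + 2) : ℝ) * t (i + 1))
  /-- condition (i): `a_i = 2` implies `ε_i = +1` or `ε_{i+1} = +1` -/
  hcond1 : ∀ i, 1 ≤ i → a i = 2 → e i = 1 ∨ e (i + 1) = 1
  /-- condition (ii): if `a_i = 2`, `ε_i = -1` then `1/ᾱ_{i-1} - 1/α_i ≥ 1` -/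
  hcond2 : ∀ i, 1 ≤ i → a i = 2 → e i = -1 → 1 / ab a e (i - 1) - 1 / t i ≥ 1
  /-- condition (iii): if `a_i = 2`, `ε_{i+1} = -1` then `1/α_i - 1/ᾱ_{i-1} > 1` -/
  hcond3 : ∀ i, 1 ≤ i → a i = 2 → e (i + 1) = -1 → 1 / t i - 1 / ab a e (i - 1) > 1
  /-- condition (iv): no block `2, (-3,)^k, -2` in the sequence `(ε_i a_i)` -/
  hcond4 : ∀ i k, 1 ≤ i →
    ¬(e i * a i = 2 ∧ (∀ j, j < k → e (i + 1 + j) * a (i + 1 + j) = -3) ∧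
        e (i + 1 + k) * a (i + 1 + k) = -2)

namespace ANIE

variable {α : ℝ}

/-- `D n = D_{n-1} = α_0 α_1 ⋯ α_{n-1}` (so `D 0 = 1`, `D 1 = α`). -/
noncomputable def D (E : ANIE α) (n : ℕ) : ℝ := ∏ j ∈ Finset.range n, E.t j

/-- The number of indices `1 ≤ k ≤ i` with `a_k` odd. -/
noncomputable def oddIdx (E : ANIE α) (i : ℕ) : ℕ :=
  ((Finset.Icc 1 i).filter fun k => Odd (E.a k)).card

/-- `λ_i`: zero if `a_i` is even, `(-1)^j` if `a_i = a_{n_j}` is the `j`-th odd partial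
quotient. -/
noncomputable def lam (E : ANIE α) (i : ℕ) : ℤ :=
  if Odd (E.a i) then (-1) ^ E.oddIdx i else 0

/-- `γ_* = Σ_{i≥1} (a_i - 1 + ε_i + λ_i)/2 · D_{i-1}`. -/
noncomputable def gammaStar (E : ANIE α) : ℝ :=
  ∑' k : ℕ,
    (((E.a (k + 1) : ℝ) - 1 + (E.e (k + 1) : ℝ) + (E.lam (k + 1) : ℝ)) / 2) * E.D (k + 1)

/-- `ᾱ_i = q_{i-1}/q_i`. -/
noncomputable def abar (E : ANIE α) (i : ℕ) : ℝ := ab E.a E.e i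

/-- `δ_i = -(-ε_1)(-ε_2)⋯(-ε_{i+1})`. -/
noncomputable def delta (E : ANIE α) (i : ℕ) : ℤ := -∏ j ∈ Finset.Icc 1 (i + 1), (-E.e j)

/-- `d_n^- = (Σ_{i=1}^n t_i δ_{i-1} q_{i-1}) / (δ_{n-1} q_n)` for `γ_*` (`t_i = λ_i`). -/
noncomputable def dminus (E : ANIE α) (n : ℕ) : ℝ :=
  (∑ i ∈ Finset.Icc 1 n, (E.lam i : ℝ) * (E.delta (i - 1) : ℝ) * (qs E.a E.e (i - 1) : ℝ)) /
    ((E.delta (n - 1) : ℝ) * (qs E.a E.e n : ℝ))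

/-- `d_n^+ = (Σ_{i=n+1}^∞ t_i D_{i-1}) / D_{n-1}` for `γ_*` (`t_i = λ_i`). -/
noncomputable def dplus (E : ANIE α) (n : ℕ) : ℝ :=
  (∑' k : ℕ, (E.lam (n + 1 + k) : ℝ) * E.D (n + 1 + k)) / E.D n

/-- `i ∈ S(γ_*)`: `|d_i^-| ≤ 1 - ᾱ_i` and `-(1-ε_{i+1}α_i) ≤ d_i^+ ≤ 1+ε_{i+1}α_i`. -/
def inS (E : ANIE α) (i : ℕ) : Prop :=
  |E.dminus i| ≤ 1 - E.abar i ∧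
    -(1 - (E.e (i + 1) : ℝ) * E.t i) ≤ E.dplus i ∧
      E.dplus i ≤ 1 + (E.e (i + 1) : ℝ) * E.t i

end ANIE


namespace ANIE

variable {α : ℝ}

lemma rec_mul (E : ANIE α) (i : ℕ) :
    E.t i * ((E.a (i + 1) : ℝ) + (E.e (i + 2) : ℝ) * E.t (i + 1)) = 1 := by
  have h := E.hrec i
  have hp := E.htpos i
  have hne : ((E.a (i + 1) : ℝ) + (E.e (i + 2) : ℝ) * E.t (i + 1)) ≠ 0 := by
    intro h0
    rw [h0] at h
    simp at h
    linarith
  rw [h]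
  field_simp

lemma rec_pos (E : ANIE α) (i : ℕ) (he : E.e (i + 2) = 1) :
    E.t i * ((E.a (i + 1) : ℝ) + E.t (i + 1)) = 1 := by
  have := E.rec_mul i
  rw [he] at this
  simpa using this

lemma rec_neg (E : ANIE α) (i : ℕ) (he : E.e (i + 2) = -1) :
    E.t i * ((E.a (i + 1) : ℝ) - E.t (i + 1)) = 1 := by
  have := E.rec_mul i
  rw [he] at this
  push_cast at this
  linarith

lemma t_lt_half_of_ge (E : ANIE α) (i : ℕ) (h : 3 ≤ E.a (i + 1)) : E.t i < 1 / 2 := by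
  have ha : (3 : ℝ) ≤ E.a (i + 1) := by exact_mod_cast h
  have h1 := E.htpos i
  have h2 := E.htpos (i + 1)
  have h3 := E.htlt1 (i + 1)
  rcases E.he (i + 2) with he | he
  · have := E.rec_pos i he
    nlinarith
  · have := E.rec_neg i he
    nlinarith

lemma t_lt_half_of_pos (E : ANIE α) (i : ℕ) (h : E.e (i + 2) = 1) : E.t i < 1 / 2 := by
  have ha : (2 : ℝ) ≤ E.a (i + 1) := by exact_mod_cast E.ha (i + 1) (by omega)
  have h1 := E.htpos i
  have h2 := E.htpos (i + 1)
  have := E.rec_pos i h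
  nlinarith

lemma t_lt_half_of_neg (E : ANIE α) (i : ℕ) (h : E.e (i + 1) = -1) : E.t i < 1 / 2 := by
  have ha := E.ha (i + 1) (by omega)
  rcases Int.lt_or_eq_of_le ha with h2 | h2
  · exact E.t_lt_half_of_ge i h2
  · rcases E.hcond1 (i + 1) (by omega) h2.symm with h3 | h3
    · omega
    · exact E.t_lt_half_of_pos i h3

lemma t_lt (E : ANIE α) (i : ℕ) : E.t i < 2 / 3 := by
  rcases E.he (i + 2) with he | he
  · linarith [E.t_lt_half_of_pos i he]
  · have h := E.t_lt_half_of_neg (i + 1) he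
    have ha : (2 : ℝ) ≤ E.a (i + 1) := by exact_mod_cast E.ha (i + 1) (by omega)
    have h1 := E.htpos i
    have := E.rec_neg i he
    nlinarith

lemma D_pos (E : ANIE α) (n : ℕ) : 0 < E.D n := Finset.prod_pos fun j _ => E.htpos j

lemma D_succ (E : ANIE α) (n : ℕ) : E.D (n + 1) = E.D n * E.t n := by
  simp [D, Finset.prod_range_succ]

lemma D_add_le (E : ANIE α) (n m : ℕ) : E.D (n + m) ≤ E.D n * (2 / 3) ^ m := by
  induction m with
  | zero => simp
  | succ m ih =>
    rw [← add_assoc, D_succ, pow_succ, ← mul_assoc]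
    have := E.t_lt (n + m)
    have := E.htpos (n + m)
    have := E.D_pos (n + m)
    have := E.D_pos n
    gcongr

lemma lam_abs (E : ANIE α) (n : ℕ) : |(E.lam n : ℝ)| ≤ 1 := by
  unfold lam
  split_ifs <;> simp

lemma term_le (E : ANIE α) (n k : ℕ) :
    ‖(E.lam (n + 1 + k) : ℝ) * E.D (n + 1 + k)‖ ≤ E.D n * (2 / 3) * (2 / 3) ^ k := by
  rw [norm_mul, Real.norm_eq_abs, Real.norm_eq_abs, abs_of_pos (E.D_pos _)]
  have h1 := E.lam_abs (n + 1 + k)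
  have h2 := E.D_add_le n (1 + k)
  have h3 := E.D_pos (n + 1 + k)
  rw [← add_assoc, pow_add] at h2
  nlinarith

lemma hasSum_geo (c : ℝ) : HasSum (fun k : ℕ => c * (2 / 3) * (2 / 3 : ℝ) ^ k) (c * 2) := by
  have := (hasSum_geometric_of_lt_one (r := (2 / 3 : ℝ)) (by norm_num) (by norm_num)).mul_left
    (c * (2 / 3))
  have h2 : c * (2 / 3) * (1 - 2 / 3)⁻¹ = c * 2 := by norm_num; ring
  rw [h2] at this
  exact this

lemma summ (E : ANIE α) (n : ℕ) :
    Summable fun k : ℕ => (E.lam (n + 1 + k) : ℝ) * E.D (n + 1 + k) :=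
  Summable.of_norm_bounded (hasSum_geo (E.D n)).summable (E.term_le n)

lemma dplus_abs (E : ANIE α) (n : ℕ) : |E.dplus n| ≤ 2 := by
  unfold dplus
  rw [abs_div, abs_of_pos (E.D_pos n), div_le_iff₀ (E.D_pos n), mul_comm]
  exact tsum_of_norm_bounded (hasSum_geo (E.D n)) (E.term_le n)

lemma dplus_rec (E : ANIE α) (n : ℕ) :
    E.dplus n = E.t n * (E.lam (n + 1) + E.dplus (n + 1)) := by
  have h := (E.summ n).tsum_eq_zero_add
  unfold dplus
  rw [h]
  have h1 := E.D_pos n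
  have h2 := E.htpos n
  have h3 : (∑' k : ℕ, (E.lam (n + 1 + (k + 1)) : ℝ) * E.D (n + 1 + (k + 1)))
      = ∑' k : ℕ, (E.lam (n + 1 + 1 + k) : ℝ) * E.D (n + 1 + 1 + k) := by
    refine tsum_congr fun k => ?_
    rw [show n + 1 + (k + 1) = n + 1 + 1 + k by ring]
  rw [h3, add_zero]
  rw [D_succ]
  field_simp

/-- The signed version of `d_n^+`, equal to `|d_n^+|`. -/
noncomputable def S (E : ANIE α) (n : ℕ) : ℝ := (-1) ^ (E.oddIdx n + 1) * E.dplus n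

lemma oddIdx_succ (E : ANIE α) (n : ℕ) :
    E.oddIdx (n + 1) = E.oddIdx n + if Odd (E.a (n + 1)) then 1 else 0 := by
  unfold oddIdx
  rw [← Finset.insert_Icc_right_eq_Icc_add_one (by omega), Finset.filter_insert]
  split_ifs with h
  · rw [Finset.card_insert_of_notMem]
    simp
  · simp

lemma S_odd (E : ANIE α) (n : ℕ) (h : Odd (E.a (n + 1))) :
    E.S n = E.t n * (1 - E.S (n + 1)) := by
  unfold S
  rw [dplus_rec, oddIdx_succ, lam, oddIdx_succ]
  simp only [h, if_true]
  push_cast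
  have : ((-1 : ℝ) ^ (E.oddIdx n)) * (-1) ^ (E.oddIdx n) = 1 := by
    rw [← mul_pow]; simp
  simp only [pow_succ]
  linear_combination (E.t n) * this

lemma S_even (E : ANIE α) (n : ℕ) (h : ¬ Odd (E.a (n + 1))) :
    E.S n = E.t n * E.S (n + 1) := by
  unfold S
  rw [dplus_rec, oddIdx_succ, lam]
  simp only [h, if_false]
  push_cast
  ring

lemma S_abs (E : ANIE α) (n : ℕ) : |E.S n| = |E.dplus n| := by
  unfold S
  rw [abs_mul, abs_pow]
  simp

lemma S_approx (E : ANIE α) (m : ℕ) : ∀ n,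
    -(2 * (2 / 3 : ℝ) ^ m) ≤ E.S n ∧ E.S n ≤ 1 + 2 * (2 / 3 : ℝ) ^ m := by
  induction m with
  | zero =>
    intro n
    have h := E.dplus_abs n
    rw [← S_abs, abs_le] at h
    constructor <;> norm_num <;> linarith
  | succ m ih =>
    intro n
    obtain ⟨h1, h2⟩ := ih (n + 1)
    have ht := E.t_lt n
    have hp := E.htpos n
    have hc : (0 : ℝ) < (2 / 3) ^ m := by positivity
    rw [pow_succ]
    by_cases h : Odd (E.a (n + 1))
    · rw [E.S_odd n h]
      constructor <;> nlinarith
    · rw [E.S_even n h]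
      constructor <;> nlinarith

lemma S_bounds (E : ANIE α) (n : ℕ) : 0 ≤ E.S n ∧ E.S n ≤ 1 := by
  have hl : Filter.Tendsto (fun m : ℕ => 2 * (2 / 3 : ℝ) ^ m) Filter.atTop (nhds 0) := by
    simpa using (tendsto_pow_atTop_nhds_zero_of_lt_one (r := (2 / 3 : ℝ)) (by norm_num)
      (by norm_num)).const_mul 2
  constructor
  · have := hl.neg
    rw [neg_zero] at this
    exact le_of_tendsto' this fun m => (E.S_approx m n).1
  · have := hl.const_add 1
    rw [add_zero] at this
    exact ge_of_tendsto' this fun m => (E.S_approx m n).2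

lemma S_le_t (E : ANIE α) (n : ℕ) : E.S n ≤ E.t n := by
  have h1 := E.S_bounds (n + 1)
  have hp := E.htpos n
  by_cases h : Odd (E.a (n + 1))
  · rw [E.S_odd n h]
    nlinarith
  · rw [E.S_even n h]
    nlinarith

lemma qs_mono (E : ANIE α) (n : ℕ) :
    0 < qs E.a E.e n ∧ qs E.a E.e n < qs E.a E.e (n + 1) := by
  induction n with
  | zero =>
    have := E.ha 1 le_rfl
    simp [qs]
    omega
  | succ n ih =>
    obtain ⟨h1, h2⟩ := ih
    refine ⟨by omega, ?_⟩
    rw [show n + 1 + 1 = n + 2 from rfl, qs]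
    have ha := E.ha (n + 2) (by omega)
    rcases E.he (n + 2) with he | he <;> rw [he] <;> nlinarith

lemma ab_bounds (E : ANIE α) (i : ℕ) (hi : 1 ≤ i) :
    0 < ab E.a E.e i ∧ ab E.a E.e i < 1 := by
  obtain ⟨j, rfl⟩ : ∃ j, i = j + 1 := ⟨i - 1, by omega⟩
  obtain ⟨h1, h2⟩ := E.qs_mono j
  have h1' : (0 : ℝ) < qs E.a E.e j := by exact_mod_cast h1
  have h2' : (qs E.a E.e j : ℝ) < qs E.a E.e (j + 1) := by exact_mod_cast h2
  have h3 : (0 : ℝ) < qs E.a E.e (j + 1) := by linarith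
  simp only [ab, Nat.add_eq_zero_iff, one_ne_zero, and_false, if_false, Nat.add_sub_cancel]
  exact ⟨by positivity, by rw [div_lt_one h3]; exact h2'⟩

lemma inv_ab (E : ANIE α) (i : ℕ) (hi : 1 ≤ i) :
    1 / ab E.a E.e (i + 1) = E.a (i + 1) + E.e (i + 1) * ab E.a E.e i := by
  obtain ⟨j, rfl⟩ : ∃ j, i = j + 1 := ⟨i - 1, by omega⟩
  have h1 : (0 : ℝ) < qs E.a E.e (j + 1) := by exact_mod_cast (E.qs_mono (j + 1)).1
  simp only [ab, Nat.add_eq_zero_iff, one_ne_zero, and_false, if_false, Nat.add_sub_cancel]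
  rw [show j + 1 + 1 = j + 2 from rfl, qs]
  push_cast
  field_simp

lemma chain_alg {τ t t1 t2 t3 y f : ℝ} (hτ : 3 * τ ^ 2 - 8 * τ + 2 = 0) (hτ2 : τ < 0.28)
    (hy : y < 1) (hf : 0 ≤ f) (h0 : t * (4 - t1) = 1) (h1 : t1 * (2 + t2) = 1)
    (h2 : t2 * (2 + t3) = 1) (h3 : t3 * (2 - y) = 1) (hp : 0 < t * (t1 * (t2 * t3))) 
    (hpos : 0 < t - t * (t1 * (t2 * (t3 * f))) - τ) :
    t - t * (t1 * (t2 * (t3 * f))) - τ ≤ (y - f - τ) / 2 := by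
  have e3 : t3 = 1 / (2 - y) := by rw [eq_div_iff (by linarith)]; exact h3
  have e2 : t2 = (2 - y) / (5 - 2 * y) := by
    rw [eq_div_iff (by linarith)]; linear_combination (2 - y) * h2 - t2 * h3
  have e1 : t1 = (5 - 2 * y) / (12 - 5 * y) := by
    rw [eq_div_iff (by linarith)]
    rw [e2] at h1
    have : 5 - 2 * y ≠ 0 := by linarith
    field_simp at h1
    linarith
  have e0 : t = (12 - 5 * y) / (43 - 18 * y) := by
    rw [eq_div_iff (by linarith)]
    rw [e1] at h0
    have : 12 - 5 * y ≠ 0 := by linarith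
    field_simp at h0
    linarith
  have c0 : (0 : ℝ) < 43 - 18 * y := by linarith
  have c1 : (12 : ℝ) - 5 * y ≠ 0 := by linarith
  have c2 : (5 : ℝ) - 2 * y ≠ 0 := by linarith
  have c3 : (2 : ℝ) - y ≠ 0 := by linarith
  have cτ : (0 : ℝ) < 43 - 18 * τ := by linarith
  have key : t - t * (t1 * (t2 * (t3 * f))) - τ
      = ((y - τ) / (43 - 18 * τ) - f) / (43 - 18 * y) := by
    have hprod : t * (t1 * (t2 * (t3 * f))) = f / (43 - 18 * y) := by
      have g2 : t2 * (t3 * f) = f / (5 - 2 * y) := by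
        rw [e2, e3]; field_simp
      have g1 : t1 * (t2 * (t3 * f)) = f / (12 - 5 * y) := by
        rw [g2, e1, div_mul_div_comm, mul_comm (12 - 5 * y), mul_div_mul_left _ _ c2]
      rw [g1, e0, div_mul_div_comm, mul_comm (43 - 18 * y), mul_div_mul_left _ _ c1]
    have ht : t = τ + (y - τ) / (43 - 18 * τ) / (43 - 18 * y) := by
      rw [e0, div_div, div_eq_iff c0.ne', add_mul, div_mul_eq_mul_div,
        mul_div_mul_right _ _ c0.ne', ← sub_eq_iff_eq_add', eq_div_iff cτ.ne']
      linear_combination (6 * (43 - 18 * y)) * hτ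
    rw [hprod, sub_div]
    linarith
  rw [key] at hpos ⊢
  have hq : 0 < (y - τ) / (43 - 18 * τ) - f := by
    by_contra hcon
    push Not at hcon
    have := div_nonpos_of_nonpos_of_nonneg hcon c0.le
    linarith
  have hz : f * (43 - 18 * τ) < y - τ := by
    rw [← lt_div_iff₀ cτ]; linarith
  have hle : (y - τ) / (43 - 18 * τ) ≤ y - τ := by
    rw [div_le_iff₀ cτ]
    nlinarith
  rw [div_le_iff₀ c0]
  nlinarith

set_option maxHeartbeats 4000000 in
lemma step (E : ANIE α) {τ : ℝ} (hτ : 3 * τ ^ 2 - 8 * τ + 2 = 0) (hτ1 : 0.2792 < τ)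
    (hτ2 : τ < 0.28) (i : ℕ) (hi : 1 ≤ i) (he : E.e (i + 1) = -1) (ha : 3 ≤ E.a (i + 1)) :
    E.t i - E.S i - τ ≤ 0 ∨ (E.e (i + 5) = -1 ∧ 3 ≤ E.a (i + 5) ∧
      E.t i - E.S i - τ ≤ (E.t (i + 4) - E.S (i + 4) - τ) / 2) := by
  have p0 := E.htpos i
  have p1 := E.htpos (i + 1)
  have p2 := E.htpos (i + 2)
  have p3 := E.htpos (i + 3)
  have p4 := E.htpos (i + 4)
  have s0 := E.S_bounds i
  have s1 := E.S_bounds (i + 1)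
  have u1 := E.S_le_t (i + 1)
  by_cases a3 : E.a (i + 1) = 3
  · -- a = 3
    left
    rw [E.S_odd i (by rw [a3]; decide)]
    rcases E.he (i + 2) with h2 | h2
    · have r := E.rec_pos i h2
      rw [a3] at r
      push_cast at r
      have := E.t_lt (i + 1)
      nlinarith
    · have r := E.rec_neg i h2
      rw [a3] at r
      push_cast at r
      have := E.t_lt_half_of_neg (i + 1) h2
      nlinarith
  have ha4 : 4 ≤ E.a (i + 1) := by omega
  have ha4' : (4 : ℝ) ≤ E.a (i + 1) := by exact_mod_cast ha4
  rcases E.he (i + 2) with h2 | h2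
  · left
    have r := E.rec_pos i h2
    nlinarith
  have r0 := E.rec_neg i h2
  have b1 := E.t_lt_half_of_neg (i + 1) h2
  by_cases a4 : E.a (i + 1) = 4
  swap
  · left
    have : (5 : ℝ) ≤ E.a (i + 1) := by
      have : 5 ≤ E.a (i + 1) := by omega
      exact_mod_cast this
    nlinarith
  rw [a4] at r0
  push_cast at r0
  by_cases hsm : E.t (i + 1) ≤ 0.418
  · left
    nlinarith
  push Not at hsm
  have a2 : E.a (i + 2) = 2 := by
    by_contra hne
    have := E.ha (i + 2) (by omega)
    have h3 : (3 : ℝ) ≤ E.a (i + 2) := by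
      have : 3 ≤ E.a (i + 2) := by omega
      exact_mod_cast this
    rcases E.he (i + 3) with h | h
    · have r := E.rec_pos (i + 1) h
      simp only [Nat.add_assoc, Nat.reduceAdd] at r
      nlinarith
    · have r := E.rec_neg (i + 1) h
      have b2 := E.t_lt_half_of_neg (i + 2) h
      simp only [Nat.add_assoc, Nat.reduceAdd] at r
      nlinarith
  have e3 : E.e (i + 3) = 1 := by
    rcases E.hcond1 (i + 2) (by omega) a2 with h | h
    · omega
    · exact h
  have r1 := E.rec_pos (i + 1) e3
  simp only [Nat.add_assoc, Nat.reduceAdd] at r1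
  rw [a2] at r1
  push_cast at r1
  have t2lo : 1 / 3 < E.t (i + 2) := by
    have hc := E.hcond2 (i + 2) (by omega) a2 h2
    rw [show i + 2 - 1 = i + 1 by omega, E.inv_ab i hi, a4, he] at hc
    have hx := (E.ab_bounds i hi).1
    push_cast at hc
    have h3 : 1 / E.t (i + 2) < 3 := by linarith
    rw [div_lt_iff₀ p2] at h3
    linarith
  have Se0 : E.S i = E.t i * E.S (i + 1) := E.S_even i (by rw [a4]; decide)
  have Se1 : E.S (i + 1) = E.t (i + 1) * E.S (i + 2) :=
    E.S_even (i + 1) (by rw [show i + 1 + 1 = i + 2 from rfl, a2]; decide)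
  have t1hi : E.t (i + 1) < 3 / 7 := by nlinarith
  have t0hi : E.t i < 0.28 := by nlinarith
  have t0lo : 0.25 < E.t i := by nlinarith
  have s3 := E.S_bounds (i + 3)
  have u3 := E.S_le_t (i + 3)
  have ha3 := E.ha (i + 3) (by omega)
  by_cases a3e : E.a (i + 3) = 2
  swap
  · left
    have h3 : 3 ≤ E.a (i + 3) := by omega
    by_cases a33 : E.a (i + 3) = 3
    · have Se2 : E.S (i + 2) = E.t (i + 2) * (1 - E.S (i + 3)) :=
        E.S_odd (i + 2) (by rw [show i + 2 + 1 = i + 3 from rfl, a33]; decide)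
      have hlo : 1 / 9 < E.S (i + 2) := by
        have := E.t_lt (i + 3)
        rw [Se2]
        nlinarith
      have : 0.418 * (1 / 9) < E.S (i + 1) := by rw [Se1]; nlinarith
      have : 0.25 * (0.418 * (1 / 9)) < E.S i := by rw [Se0]; nlinarith
      linarith
    · exfalso
      have h4 : (4 : ℝ) ≤ E.a (i + 3) := by
        have : 4 ≤ E.a (i + 3) := by omega
        exact_mod_cast this
      have := E.htlt1 (i + 3)
      rcases E.he (i + 4) with h | h
      · have r := E.rec_pos (i + 2) h
        simp only [Nat.add_assoc, Nat.reduceAdd] at r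
        nlinarith
      · have r := E.rec_neg (i + 2) h
        simp only [Nat.add_assoc, Nat.reduceAdd] at r
        nlinarith
  have t2hi : E.t (i + 2) < 0.4 := by nlinarith
  have e4 : E.e (i + 4) = 1 := by
    rcases E.he (i + 4) with h | h
    · exact h
    · exfalso
      have r := E.rec_neg (i + 2) h
      simp only [Nat.add_assoc, Nat.reduceAdd] at r
      rw [a3e] at r
      push_cast at r
      nlinarith
  have r2 := E.rec_pos (i + 2) e4
  simp only [Nat.add_assoc, Nat.reduceAdd] at r2
  rw [a3e] at r2
  push_cast at r2
  have t3lo : 1 / 2 < E.t (i + 3) := by nlinarith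
  have a4e : E.a (i + 4) = 2 := by
    by_contra hne
    have := E.ha (i + 4) (by omega)
    have := E.t_lt_half_of_ge (i + 3) (by rw [show i + 3 + 1 = i + 4 from rfl]; omega)
    linarith
  have e5 : E.e (i + 5) = -1 := by
    rcases E.he (i + 5) with h | h
    · have := E.t_lt_half_of_pos (i + 3) h
      linarith
    · exact h
  have r3 := E.rec_neg (i + 3) e5
  simp only [Nat.add_assoc, Nat.reduceAdd] at r3
  rw [a4e] at r3
  push_cast at r3
  have a5 : 3 ≤ E.a (i + 5) := by
    have h := E.ha (i + 5) (by omega)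
    by_contra hne
    have h2' : E.a (i + 5) = 2 := by omega
    apply E.hcond4 (i + 4) 0 (by omega)
    refine ⟨by rw [e4, a4e]; rfl, by intro j hj; omega, ?_⟩
    rw [show i + 4 + 1 + 0 = i + 5 from rfl, e5, h2']
    rfl
  have Se2 : E.S (i + 2) = E.t (i + 2) * E.S (i + 3) :=
    E.S_even (i + 2) (by rw [show i + 2 + 1 = i + 3 from rfl, a3e]; decide)
  have Se3 : E.S (i + 3) = E.t (i + 3) * E.S (i + 4) :=
    E.S_even (i + 3) (by rw [show i + 3 + 1 = i + 4 from rfl, a4e]; decide)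
  by_cases hpos : E.t i - E.S i - τ ≤ 0
  · exact Or.inl hpos
  right
  refine ⟨e5, a5, ?_⟩
  push Not at hpos
  rw [Se0, Se1, Se2, Se3] at hpos ⊢
  exact chain_alg hτ hτ2 (E.htlt1 (i + 4)) (E.S_bounds (i + 4)).1 r0 r1 r2 r3
    (by positivity) hpos

lemma main_approx (E : ANIE α) {τ : ℝ} (hτ : 3 * τ ^ 2 - 8 * τ + 2 = 0) (hτ1 : 0.2792 < τ)
    (hτ2 : τ < 0.28) (m : ℕ) : ∀ i, 1 ≤ i → E.e (i + 1) = -1 → 3 ≤ E.a (i + 1) →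
    E.t i - E.S i - τ ≤ (1 / 2 : ℝ) ^ m := by
  induction m with
  | zero =>
    intro i _ _ _
    have := E.htlt1 i
    have := E.S_bounds i
    norm_num
    linarith
  | succ m ih =>
    intro i hi he ha
    rcases E.step hτ hτ1 hτ2 i hi he ha with h | ⟨h1, h2, h3⟩
    · have : (0 : ℝ) < (1 / 2) ^ (m + 1) := by positivity
      linarith
    · have := ih (i + 4) (by omega) h1 h2
      rw [pow_succ]
      linarith

lemma main_bound (E : ANIE α) {τ : ℝ} (hτ : 3 * τ ^ 2 - 8 * τ + 2 = 0) (hτ1 : 0.2792 < τ)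
    (hτ2 : τ < 0.28) (i : ℕ) (hi : 1 ≤ i) (he : E.e (i + 1) = -1) (ha : 3 ≤ E.a (i + 1)) :
    E.t i - E.S i - τ ≤ 0 :=
  ge_of_tendsto' (tendsto_pow_atTop_nhds_zero_of_lt_one (r := (1 / 2 : ℝ)) (by norm_num)
      (by norm_num)) fun m => E.main_approx hτ hτ1 hτ2 m i hi he ha

end ANIE

/-- Lemma 4: for an adjusted nearest integer expansion, if `ε_{i+1} = -1` and
`a_{i+1} ≥ 3` then `(1-α_i+|d_i^+|)/(1-ᾱ_iα_i) ≥ (√10+2)/(√10+2+2(1-ᾱ_i))`. -/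
theorem stmt11 (α : ℝ) (hirr : Irrational α) (h0 : 0 < α) (h12 : α < 1 / 2)
    (E : ANIE α) (i : ℕ) (hi : 1 ≤ i)
    (he : E.e (i + 1) = -1) (ha : 3 ≤ E.a (i + 1)) :
    (1 - E.t i + |E.dplus i|) / (1 - E.abar i * E.t i) ≥
      (Real.sqrt 10 + 2) / (Real.sqrt 10 + 2 + 2 * (1 - E.abar i)) := by
  have hs : Real.sqrt 10 ^ 2 = 10 := Real.sq_sqrt (by norm_num)
  have hs0 : 0 ≤ Real.sqrt 10 := Real.sqrt_nonneg _
  have hs1 : Real.sqrt 10 < 3.1623 := by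
    rw [Real.sqrt_lt' (by norm_num)]; norm_num
  have hs2 : 3.162 < Real.sqrt 10 := by
    rw [Real.lt_sqrt (by norm_num)]; norm_num
  have hb := E.main_bound (τ := (4 - Real.sqrt 10) / 3) (by linear_combination hs / 3)
    (by linarith) (by linarith) i hi he ha
  have hS := E.S_bounds i
  rw [← E.S_abs i, abs_of_nonneg hS.1]
  have hx := E.ab_bounds i hi
  change 0 < E.abar i ∧ E.abar i < 1 at hx
  obtain ⟨x0, x1⟩ := hx
  have p0 := E.htpos i
  have p1 := E.htlt1 i
  generalize E.abar i = x at *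
  generalize E.t i = t at *
  generalize E.S i = d at *
  generalize Real.sqrt 10 = s at *
  have hd1 : 0 < 1 - x * t := by nlinarith
  have hd2 : 0 < s + 2 + 2 * (1 - x) := by linarith
  rw [ge_iff_le, div_le_div_iff₀ hd2 hd1]
  have k1 : (s + 4) * (t - d) ≤ 2 := by
    have : (s + 4) * ((4 - s) / 3) = 2 := by linear_combination -hs / 3
    nlinarith
  have k2 : 0 ≤ (1 - x) * (2 - (s + 4) * (t - d)) :=
    mul_nonneg (by linarith) (by linarith)
  have k3 : 0 ≤ d * x * (s + 2) := by
    have := hS.1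
    positivity
  linarith
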